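/- arXiv:math/0010330 — 2 statements merged into one kernel-verified Lean document; each statement's English description precedes it below -/
import Mathlib

section
/- For each integer m ≥ 0, the algebra homomorphism ρ_m : A_t → M_{m+1}(ℂ) is surjective. -/
open scoped TensorProduct
open Complex

noncomputable section

/-- The four generators `X`, `Y`, `K`, `K⁻¹` of the algebra `Aₜ`. -/
inductive QGen : Type
  | X | Y | K | K'
  deriving DecidableEq

/-- The image of a generator in the free algebra on the generators. -/
def qg (x : QGen) : FreeAlgebra ℂ QGen := FreeAlgebra.ι ℂ x

/-- The defining relations of `Aₜ`:
`KX = t²XK`, `KY = t⁻²YK`, `XY − YX = (K² − K⁻²)/(t² − t⁻²)`, `KK⁻¹ = K⁻¹K = 1`. -/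
inductive QRel (t : ℂ) : FreeAlgebra ℂ QGen → FreeAlgebra ℂ QGen → Prop
  | KX : QRel t (qg .K * qg .X) ((t ^ 2 : ℂ) • (qg .X * qg .K))
  | KY : QRel t (qg .K * qg .Y) ((t⁻¹ ^ 2 : ℂ) • (qg .Y * qg .K))
  | XY : QRel t (qg .X * qg .Y - qg .Y * qg .X)
      (((t ^ 2 - t⁻¹ ^ 2)⁻¹ : ℂ) • (qg .K * qg .K - qg .K' * qg .K'))
  | KK' : QRel t (qg .K * qg .K') 1
  | K'K : QRel t (qg .K' * qg .K) 1

/-- The algebra `Aₜ`: the quotient of the free algebra by the defining relations. -/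
abbrev At (t : ℂ) : Type := RingQuot (QRel t)

/-- The generator `X` in `Aₜ`. -/
def aX (t : ℂ) : At t := RingQuot.mkAlgHom ℂ (QRel t) (qg .X)
/-- The generator `Y` in `Aₜ`. -/
def aY (t : ℂ) : At t := RingQuot.mkAlgHom ℂ (QRel t) (qg .Y)
/-- The generator `K` in `Aₜ`. -/
def aK (t : ℂ) : At t := RingQuot.mkAlgHom ℂ (QRel t) (qg .K)
/-- The generator `K⁻¹` in `Aₜ`. -/
def aK' (t : ℂ) : At t := RingQuot.mkAlgHom ℂ (QRel t) (qg .K')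

/-- The quantum integer `[n] = (t^{2n} − t^{−2n})/(t² − t⁻²)`. -/
def qint (t : ℂ) (n : ℤ) : ℂ := (t ^ (2 * n) - t ^ (-(2 * n))) / (t ^ 2 - t⁻¹ ^ 2)

/-- The matrix of `ρ_m(K)`: `K e_j = t^{m−2j} e_j`. -/
def Kmat (t : ℂ) (m : ℕ) : Matrix (Fin (m + 1)) (Fin (m + 1)) ℂ :=
  Matrix.diagonal fun j => t ^ ((m : ℤ) - 2 * (j : ℤ))

/-- The matrix of `ρ_m(K⁻¹)`: `K⁻¹ e_j = t^{−(m−2j)} e_j`. -/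
def K'mat (t : ℂ) (m : ℕ) : Matrix (Fin (m + 1)) (Fin (m + 1)) ℂ :=
  Matrix.diagonal fun j => t ^ (-((m : ℤ) - 2 * (j : ℤ)))

/-- The matrix of `ρ_m(X)`: `X e_j = [j] e_{j−1}` (with `e_{−1} = 0`). -/
def Xmat (t : ℂ) (m : ℕ) : Matrix (Fin (m + 1)) (Fin (m + 1)) ℂ :=
  Matrix.of fun i j => if (j : ℕ) = (i : ℕ) + 1 then qint t (j : ℤ) else 0

/-- The matrix of `ρ_m(Y)`: `Y e_j = [m−j] e_{j+1}` (with `e_{m+1} = 0`). -/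
def Ymat (t : ℂ) (m : ℕ) : Matrix (Fin (m + 1)) (Fin (m + 1)) ℂ :=
  Matrix.of fun i j => if (i : ℕ) = (j : ℕ) + 1 then qint t ((m : ℤ) - (j : ℤ)) else 0

/-- `ρ` is the representation `ρ_m : Aₜ → M_{m+1}(ℂ)` determined by the matrices above. -/
def IsRho (t : ℂ) (m : ℕ) (ρ : At t →ₐ[ℂ] Matrix (Fin (m + 1)) (Fin (m + 1)) ℂ) : Prop :=
  ρ (aX t) = Xmat t m ∧ ρ (aY t) = Ymat t m ∧ ρ (aK t) = Kmat t m ∧ ρ (aK' t) = K'mat t m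

/-!
The eigenvalues `t ^ (m - 2j)` of `K` are distinct, so Lagrange interpolation in `K` produces every
diagonal matrix unit. Multiplying `X` and `Y` by these on both sides isolates their entries, the
nonzero quantum integers `[1], …, [m]`, which gives the matrix units `E_{i,i+1}` and `E_{i+1,i}`.
The products of these are all the matrix units.
-/

section MatrixSubalgebra

open Matrix Polynomial

variable {n : Type*} [Fintype n] [DecidableEq n]

theorem aeval_diagonal {R : Type*} [CommSemiring R] (v : n → R) (p : R[X]) :
    aeval (diagonal v) p = diagonal fun i => p.eval (v i) := by
  rw [← diagonalAlgHom_apply (R := R), aeval_algHom_apply, aeval_pi_apply, diagonalAlgHom_apply]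
  simp only [coe_aeval_eq_eval]

theorem eq_top_of_forall_single_mem {R : Type*} [CommSemiring R]
    {S : Subalgebra R (Matrix n n R)} (hS : ∀ i j, single i j (1 : R) ∈ S) : S = ⊤ := by
  refine Algebra.eq_top_iff.mpr fun M => ?_
  induction M using Matrix.induction_on' with
  | h_zero => exact S.zero_mem
  | h_add _ _ hp hq => exact S.add_mem hp hq
  | h_std_basis i j x => simpa only [smul_single, smul_eq_mul, mul_one] using S.smul_mem (hS i j) x

variable {F : Type*} [Field F] {S : Subalgebra F (Matrix n n F)}

theorem single_self_mem_of_diagonal_mem {v : n → F} (hv : Function.Injective v)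
    (hS : diagonal v ∈ S) (i : n) : single i i (1 : F) ∈ S := by
  have heval : (fun j => (Lagrange.basis Finset.univ v i).eval (v j)) = Pi.single i 1 := by
    funext j
    obtain rfl | hij := eq_or_ne i j
    · rw [Lagrange.eval_basis_self hv.injOn (Finset.mem_univ i), Pi.single_eq_same]
    · rw [Lagrange.eval_basis_of_ne hij (Finset.mem_univ j), Pi.single_eq_of_ne' hij]
  rw [← diagonal_single, ← heval, ← aeval_diagonal]
  exact Algebra.adjoin_le (Set.singleton_subset_iff.mpr hS) (aeval_mem_adjoin_singleton F _)

theorem single_mem_of_apply_ne_zero {i j : n} (hi : single i i (1 : F) ∈ S)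
    (hj : single j j (1 : F) ∈ S) {M : Matrix n n F} (hM : M ∈ S) (hij : M i j ≠ 0) :
    single i j (1 : F) ∈ S := by
  have hmul : single i i 1 * M * single j j 1 ∈ S := S.mul_mem (S.mul_mem hi hM) hj
  rw [single_mul_mul_single, one_mul, mul_one] at hmul
  simpa only [smul_single, smul_eq_mul, inv_mul_cancel₀ hij] using S.smul_mem hmul (M i j)⁻¹

theorem eq_top_of_diagonal_mem_of_reflTransGen {v : n → F} (hv : Function.Injective v)
    (hS : diagonal v ∈ S)
    (hconn : ∀ i j, Relation.ReflTransGen (fun k l => ∃ M ∈ S, M k l ≠ 0) i j) : S = ⊤ := by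
  have hdiag := single_self_mem_of_diagonal_mem hv hS
  refine eq_top_of_forall_single_mem fun i j => ?_
  induction hconn i j with
  | refl => exact hdiag i
  | @tail k l _ hkl ih =>
    obtain ⟨M, hM, hne⟩ := hkl
    simpa only [single_mul_single_same, mul_one] using
      S.mul_mem ih (single_mem_of_apply_ne_zero (hdiag k) (hdiag l) hM hne)

end MatrixSubalgebra

theorem reflTransGen_of_castSucc_succ {m : ℕ} {r : Fin (m + 1) → Fin (m + 1) → Prop}
    (hup : ∀ i : Fin m, r i.castSucc i.succ) (hdown : ∀ i : Fin m, r i.succ i.castSucc)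
    (i j : Fin (m + 1)) : Relation.ReflTransGen r i j := by
  refine reflTransGen_of_succ r (fun k hk => ?_) (fun k hk => ?_)
  all_goals
    obtain ⟨k, rfl⟩ := Fin.exists_castSucc_eq.mpr (Fin.ne_last_of_lt hk.2)
    rw [Fin.orderSucc_castSucc]
  exacts [hup k, hdown k]

theorem sub_inv_ne_zero {F : Type*} [DivisionRing F] {a : F} (ha : a ≠ 0) (hsq : a ^ 2 ≠ 1) :
    a - a⁻¹ ≠ 0 := by
  rwa [sub_ne_zero, Ne, ← mul_eq_one_iff_eq_inv₀ ha, ← sq]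

theorem zpow_sub_two_mul_injective {G₀ : Type*} [GroupWithZero G₀] {t : G₀} (ht : t ≠ 0) {m : ℕ}
    (htk : ∀ k : ℕ, 0 < k → k ≤ m → t ^ (2 * k) ≠ 1) :
    Function.Injective fun j : Fin (m + 1) => t ^ ((m : ℤ) - 2 * (j : ℤ)) := by
  refine Function.Injective.of_lt_imp_ne fun i j hij heq => ?_
  obtain ⟨k, hk⟩ := Nat.exists_eq_add_of_lt hij
  refine htk (k + 1) k.succ_pos (by omega) ?_
  calc t ^ (2 * (k + 1)) = t ^ ((m - 2 * (i : ℤ)) - (m - 2 * (j : ℤ))) := by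
        rw [← zpow_natCast, hk]; congr 1; push_cast; ring
    _ = t ^ (m - 2 * (i : ℤ)) / t ^ (m - 2 * (j : ℤ)) := zpow_sub₀ ht _ _
    _ = 1 := (div_eq_one_iff_eq (zpow_ne_zero _ ht)).mpr heq

theorem qint_natCast (t : ℂ) (k : ℕ) :
    qint t k = ((t ^ 2) ^ k - ((t ^ 2) ^ k)⁻¹) / (t ^ 2 - (t ^ 2)⁻¹) := by
  rw [qint, zpow_neg, zpow_mul, zpow_natCast, zpow_ofNat, inv_pow]

theorem qint_natCast_ne_zero {t : ℂ} (ht : t ≠ 0) {k : ℕ} (hk : t ^ (4 * k) ≠ 1) :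
    qint t k ≠ 0 := by
  have ht4 : t ^ 4 ≠ 1 := fun h => hk (by rw [pow_mul, h, one_pow])
  have ht2 : t ^ 2 ≠ 0 := pow_ne_zero 2 ht
  rw [qint_natCast]
  refine div_ne_zero (sub_inv_ne_zero (pow_ne_zero k ht2) ?_) (sub_inv_ne_zero ht2 ?_)
  · rwa [← pow_mul, ← pow_mul, show 2 * (k * 2) = 4 * k by ring]
  · rwa [← pow_mul]

theorem Xmat_castSucc_succ (t : ℂ) {m : ℕ} (i : Fin m) :
    Xmat t m i.castSucc i.succ = qint t ((i + 1 : ℕ) : ℤ) := by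
  simp [Xmat]

theorem Ymat_succ_castSucc (t : ℂ) {m : ℕ} (i : Fin m) :
    Ymat t m i.succ i.castSucc = qint t ((m - i : ℕ) : ℤ) := by
  simp [Ymat, Nat.cast_sub i.isLt.le]

theorem stmt2_general (t : ℂ) (ht : t ≠ 0) (m : ℕ)
    (hroot : ∀ k : ℕ, 0 < k → k ≤ m → t ^ (4 * k) ≠ 1)
    (ρ : At t →ₐ[ℂ] Matrix (Fin (m + 1)) (Fin (m + 1)) ℂ) (hρ : IsRho t m ρ) :
    Function.Surjective ρ := by
  obtain ⟨hX, hY, hK, -⟩ := hρ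
  have hqint (k : ℕ) (hpos : 0 < k) (hle : k ≤ m) : qint t k ≠ 0 :=
    qint_natCast_ne_zero ht (hroot k hpos hle)
  have hsq (k : ℕ) (hpos : 0 < k) (hle : k ≤ m) : t ^ (2 * k) ≠ 1 := fun h =>
    hroot k hpos hle (by rw [show 4 * k = 2 * k * 2 by ring, pow_mul, h, one_pow])
  have hKmem : Kmat t m ∈ ρ.range := ⟨aK t, hK⟩
  rw [← AlgHom.range_eq_top]
  refine eq_top_of_diagonal_mem_of_reflTransGen (zpow_sub_two_mul_injective ht hsq) hKmem
    (reflTransGen_of_castSucc_succ (fun i => ?_) fun i => ?_)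
  · refine ⟨Xmat t m, ⟨aX t, hX⟩, ?_⟩
    rw [Xmat_castSucc_succ]
    exact hqint (i + 1) (by omega) (by omega)
  · refine ⟨Ymat t m, ⟨aY t, hY⟩, ?_⟩
    rw [Ymat_succ_castSucc]
    exact hqint (m - i) (by omega) (by omega)

/-- For each `m ≥ 0`, the algebra homomorphism `ρ_m : Aₜ → M_{m+1}(ℂ)`
is surjective. -/
theorem stmt2 (t : ℂ) (ht : t ≠ 0) (hroot : ∀ k : ℕ, 0 < k → t ^ k ≠ 1) (m : ℕ)
    (ρ : At t →ₐ[ℂ] Matrix (Fin (m + 1)) (Fin (m + 1)) ℂ) (hρ : IsRho t m ρ) :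
    Function.Surjective ρ :=
  stmt2_general t ht m (fun k hk _ => hroot (4 * k) (by omega)) ρ hρ

end
end

section
/- The algebra homomorphism Θ : A_t → ∏_{m≥0} M_{m+1}(ℂ) defined by Θ(Z) = (ρ_0(Z), ρ_1(Z), ρ_2(Z), …) is injective. -/
open scoped TensorProduct
open Complex

noncomputable section

/-! Moving `Y` to the left and `X` to the right writes every element of `Aₜ` as a finite sum
`∑ Yᵃ p_{ab}(K) Xᵇ` with Laurent polynomials `p_{ab}`. If some coefficient is nonzero, choose one
with `b` minimal. In `m̲` the vector `e_b` is killed by `X ^ b'` for `b' > b` and is sent by `X ^ b`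
to a nonzero multiple of `e_0`, so for `m ≥ a, b` the coefficient of `e_a` in the image of `e_b` is
a nonzero multiple of `p_{ab}(t ^ m)`. If the element acts as zero on infinitely many `m̲`, then
`p_{ab}` has infinitely many roots `t ^ m` and must vanish, a contradiction.
-/

open LaurentPolynomial
open scoped Matrix

section LaurentPolynomial

variable {R A : Type*} [CommSemiring R] [Semiring A] [Algebra R A]

/-- Evaluation `p ↦ p(u)` of Laurent polynomials at a unit `u` of an algebra that need not be
commutative, unlike the target of `LaurentPolynomial.eval₂`. -/
def laurentAeval (u : Aˣ) : R[T;T⁻¹] →ₐ[R] A :=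
  AddMonoidAlgebra.lift R A ℤ ((Units.coeHom A).comp (zpowersHom Aˣ u))

lemma laurentAeval_T (u : Aˣ) (n : ℤ) : laurentAeval u (T n : R[T;T⁻¹]) = ↑(u ^ n) :=
  (AddMonoidAlgebra.lift_single _ n 1).trans (by simp)

lemma laurentPolynomial_algHom_ext {f g : R[T;T⁻¹] →ₐ[R] A} (h : f (T 1) = g (T 1)) : f = g :=
  AddMonoidAlgebra.algHom_ext' (MonoidHom.ext_mint h)
    (AlgHom.ext fun r ↦ (f.commutes r).trans (g.commutes r).symm)

lemma laurentPolynomial_eq_zero_of_infinite_root {R : Type*} [CommRing R] [IsDomain R]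
    {p : R[T;T⁻¹]} {s : Set Rˣ} (hs : s.Infinite) (hp : ∀ u ∈ s, laurentAeval u p = 0) :
    p = 0 := by
  obtain ⟨n, q, hq⟩ := p.exists_T_pow
  have aeval_toLaurent (u : Rˣ) : laurentAeval u (Polynomial.toLaurent q) = q.eval (u : R) := by
    have : (laurentAeval (R := R) u).comp Polynomial.toLaurentAlg = Polynomial.aeval (u : R) := by
      ext
      simp [laurentAeval_T]
    simpa using DFunLike.congr_fun this q
  have hq0 : q = 0 := by
    refine q.eq_zero_of_infinite_isRoot ((hs.image Units.val_injective.injOn).mono ?_)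
    rintro _ ⟨u, hu, rfl⟩
    rw [Set.mem_ofPred_eq, Polynomial.IsRoot, ← aeval_toLaurent, hq, map_mul, hp u hu, zero_mul]
  rw [hq0, map_zero] at hq
  exact ((isUnit_T n).mul_left_eq_zero).1 hq.symm

end LaurentPolynomial

section SkewCommutation

variable {R A : Type*} [CommSemiring R] [Semiring A] [Algebra R A]

lemma mul_pow_of_mul_eq_smul {x y : A} {c : R} (h : x * y = c • (y * x)) (n : ℕ) :
    x * y ^ n = c ^ n • (y ^ n * x) := by
  have : SemiconjBy x y (c • y) := by rw [SemiconjBy, h, smul_mul_assoc]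
  rw [(this.pow_right n).eq, smul_pow, smul_mul_assoc]

lemma mul_zpow_of_mul_eq_smul {x : A} {u : Aˣ} {c : Rˣ} (h : x * u = c • (u * x)) (n : ℤ) :
    x * ↑(u ^ n) = c ^ n • (↑(u ^ n) * x) := by
  set v : Aˣ := Units.map (algebraMap R A) c
  have hv (m : ℤ) (a : A) : ↑(v ^ m) * a = c ^ m • a := by
    rw [← map_zpow, Units.smul_def, Algebra.smul_def]; rfl
  have hvu : Commute v u := Units.ext (Algebra.commutes (c : R) (u : A))
  have : SemiconjBy x u ↑(v * u) := by
    rw [SemiconjBy, h, Units.val_mul, mul_assoc, ← zpow_one v, hv, zpow_one]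
  rw [(this.units_zpow_right n).eq, hvu.mul_zpow, Units.val_mul, mul_assoc, hv]

end SkewCommutation

lemma submodule_eq_top_of_adjoin_eq_top_of_mul_mem {R A : Type*} [CommSemiring R] [Semiring A]
    [Algebra R A] {s : Set A} (hs : Algebra.adjoin R s = ⊤) {P : Submodule R A} (one_mem : 1 ∈ P)
    (mul_mem : ∀ g ∈ s, ∀ z ∈ P, g * z ∈ P) : P = ⊤ := by
  have mul_mem_of_adjoin (x : A) (hx : x ∈ Algebra.adjoin R s) : ∀ z ∈ P, x * z ∈ P := by
    induction hx using Algebra.adjoin_induction with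
    | mem g hg => exact mul_mem g hg
    | algebraMap r => exact fun z hz ↦ Algebra.smul_def r z ▸ P.smul_mem r hz
    | add x y _ _ hx hy => exact fun z hz ↦ add_mul x y z ▸ P.add_mem (hx z hz) (hy z hz)
    | mul x y _ _ hx hy => exact fun z hz ↦ mul_assoc x y z ▸ hx _ (hy z hz)
  refine P.eq_top_iff'.2 fun x ↦ ?_
  simpa using mul_mem_of_adjoin x (hs ▸ Algebra.mem_top) 1 one_mem

section Relations

lemma aK_mul_aX (t : ℂ) : aK t * aX t = t ^ 2 • (aX t * aK t) := by
  simpa [aK, aX] using RingQuot.mkAlgHom_rel ℂ (QRel.KX (t := t))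

lemma aK_mul_aY (t : ℂ) : aK t * aY t = t⁻¹ ^ 2 • (aY t * aK t) := by
  simpa [aK, aY] using RingQuot.mkAlgHom_rel ℂ (QRel.KY (t := t))

lemma aK_mul_aK' (t : ℂ) : aK t * aK' t = 1 := by
  simpa [aK, aK'] using RingQuot.mkAlgHom_rel ℂ (QRel.KK' (t := t))

lemma aK'_mul_aK (t : ℂ) : aK' t * aK t = 1 := by
  simpa [aK, aK'] using RingQuot.mkAlgHom_rel ℂ (QRel.K'K (t := t))

/-- The generator `K` as a unit of `Aₜ`, so that `Kⁿ` makes sense for `n : ℤ`. -/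
def unitK (t : ℂ) : (At t)ˣ := ⟨aK t, aK' t, aK_mul_aK' t, aK'_mul_aK t⟩

lemma val_unitK (t : ℂ) : (unitK t : At t) = aK t := rfl

lemma val_inv_unitK (t : ℂ) : (↑(unitK t)⁻¹ : At t) = aK' t := rfl

lemma aX_mul_aY (t : ℂ) : aX t * aY t = aY t * aX t +
    (t ^ 2 - t⁻¹ ^ 2)⁻¹ • (↑(unitK t ^ (2 : ℤ)) - ↑(unitK t ^ (-2 : ℤ))) := by
  have hK2 : (↑(unitK t ^ (2 : ℤ)) : At t) = aK t * aK t := congrArg Units.val (zpow_two _)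
  have hK'2 : (↑(unitK t ^ (-2 : ℤ)) : At t) = aK' t * aK' t :=
    congrArg Units.val ((inv_zpow' (unitK t) 2).symm.trans (zpow_two _))
  rw [← sub_eq_iff_eq_add', hK2, hK'2]
  simpa [aX, aY, aK, aK'] using RingQuot.mkAlgHom_rel ℂ (QRel.XY (t := t))

lemma adjoin_generators_eq_top (t : ℂ) :
    Algebra.adjoin ℂ {aX t, aY t, aK t, aK' t} = ⊤ := by
  have : {aX t, aY t, aK t, aK' t} =
      RingQuot.mkAlgHom ℂ (QRel t) '' Set.range (FreeAlgebra.ι ℂ) := by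
    ext z
    simp only [Set.mem_insert_iff, Set.mem_singleton_iff, Set.mem_image, Set.mem_range,
      exists_exists_eq_and]
    constructor
    · rintro (rfl | rfl | rfl | rfl)
      exacts [⟨.X, rfl⟩, ⟨.Y, rfl⟩, ⟨.K, rfl⟩, ⟨.K', rfl⟩]
    · rintro ⟨_ | _ | _ | _, rfl⟩ <;> simp [aX, aY, aK, aK', qg]
  rw [this, ← AlgHom.map_adjoin, FreeAlgebra.adjoin_range_ι, Algebra.map_top,
    AlgHom.range_eq_top]
  exact RingQuot.mkAlgHom_surjective ℂ (QRel t)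

lemma aX_mul_zpow_unitK (t : ℂˣ) (n : ℤ) :
    aX t * ↑(unitK t ^ n) = (t⁻¹ ^ 2) ^ n • (↑(unitK t ^ n) * aX t) := by
  refine mul_zpow_of_mul_eq_smul ?_ n
  change aX t * aK t = (t⁻¹ ^ 2) • (aK t * aX t)
  rw [eq_comm, inv_pow, inv_smul_eq_iff, aK_mul_aX]
  rfl

lemma zpow_unitK_mul_pow_aY (t : ℂˣ) (n : ℤ) (a : ℕ) :
    ↑(unitK t ^ n) * aY t ^ a = (((t⁻¹ ^ 2) ^ n) ^ a : ℂˣ) • (aY t ^ a * ↑(unitK t ^ n)) := by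
  have hYK : aY t * unitK t = (t ^ 2) • (unitK t * aY t) := by
    change aY t * aK t = (t ^ 2) • (aK t * aY t)
    rw [eq_comm, ← eq_inv_smul_iff, aK_mul_aY, ← inv_pow]
    simp [Units.smul_def]
  have hKY : ↑(unitK t ^ n) * aY t = ((t⁻¹ ^ 2) ^ n : ℂˣ) • (aY t * ↑(unitK t ^ n)) := by
    rw [inv_pow, inv_zpow, eq_inv_smul_iff, mul_zpow_of_mul_eq_smul hYK]
  rw [mul_pow_of_mul_eq_smul (c := (((t⁻¹ ^ 2) ^ n : ℂˣ) : ℂ)) hKY,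
    Units.smul_def, Units.val_pow_eq_pow_val]

end Relations

section MonomialSpan

variable (t : ℂ)

/-- The span of the Poincaré–Birkhoff–Witt monomials `Yᵃ Kⁿ Xᵇ`; it is shown to be all of `Aₜ`. -/
def monomialSpan : Submodule ℂ (At t) :=
  Submodule.span ℂ (Set.range fun x : ℕ × ℤ × ℕ ↦ aY t ^ x.1 * ↑(unitK t ^ x.2.1) * aX t ^ x.2.2)

variable {t}

lemma monomial_mem_monomialSpan (a : ℕ) (n : ℤ) (b : ℕ) :
    aY t ^ a * ↑(unitK t ^ n) * aX t ^ b ∈ monomialSpan t :=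
  Submodule.subset_span ⟨(a, n, b), rfl⟩

lemma mul_mem_monomialSpan {g : At t}
    (hg : ∀ (a : ℕ) (n : ℤ) (b : ℕ), g * (aY t ^ a * ↑(unitK t ^ n) * aX t ^ b) ∈ monomialSpan t)
    {z : At t} (hz : z ∈ monomialSpan t) : g * z ∈ monomialSpan t := by
  suffices monomialSpan t ≤ (monomialSpan t).comap (LinearMap.mulLeft ℂ g) from this hz
  refine Submodule.span_le.2 ?_
  rintro _ ⟨x, rfl⟩
  exact hg x.1 x.2.1 x.2.2

lemma aY_mul_mem_monomialSpan {z : At t} (hz : z ∈ monomialSpan t) :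
    aY t * z ∈ monomialSpan t := by
  refine mul_mem_monomialSpan (fun a n b ↦ ?_) hz
  rw [← mul_assoc, ← mul_assoc, ← pow_succ']
  exact monomial_mem_monomialSpan (a + 1) n b

end MonomialSpan

section Spanning

variable {t : ℂˣ}

lemma zpow_unitK_mul_mem_monomialSpan (k : ℤ) {z : At (t : ℂ)} (hz : z ∈ monomialSpan (t : ℂ)) :
    ↑(unitK t ^ k) * z ∈ monomialSpan (t : ℂ) := by
  refine mul_mem_monomialSpan (fun a n b ↦ ?_) hz
  rw [← mul_assoc, ← mul_assoc, zpow_unitK_mul_pow_aY, smul_mul_assoc, smul_mul_assoc,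
    mul_assoc (aY (t : ℂ) ^ a), ← Units.val_mul, ← zpow_add]
  exact Submodule.smul_mem _ _ (monomial_mem_monomialSpan a (k + n) b)

lemma aX_mul_mem_monomialSpan {z : At (t : ℂ)} (hz : z ∈ monomialSpan (t : ℂ)) :
    aX t * z ∈ monomialSpan (t : ℂ) := by
  refine mul_mem_monomialSpan (fun a n b ↦ ?_) hz
  induction a with
  | zero =>
    rw [pow_zero, one_mul, ← mul_assoc, aX_mul_zpow_unitK t n, smul_mul_assoc, mul_assoc,
      ← pow_succ']
    exact Submodule.smul_mem _ _ (by simpa using monomial_mem_monomialSpan (t := t) 0 n (b + 1))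
  | succ a ih =>
    set w := aY (t : ℂ) ^ a * ↑(unitK t ^ n) * aX t ^ b with hw
    have hXYw : aX (t : ℂ) * (aY t ^ (a + 1) * ↑(unitK t ^ n) * aX t ^ b) =
        aY t * (aX t * w) + ((t : ℂ) ^ 2 - (t : ℂ)⁻¹ ^ 2)⁻¹ •
          (↑(unitK t ^ (2 : ℤ)) * w - ↑(unitK t ^ (-2 : ℤ)) * w) := by
      calc
        _ = aX (t : ℂ) * aY t * w := by simp only [hw, pow_succ', mul_assoc]
        _ = _ := by simp only [aX_mul_aY, add_mul, smul_mul_assoc, sub_mul, mul_assoc]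
    have hw_mem : w ∈ monomialSpan (t : ℂ) := monomial_mem_monomialSpan a n b
    rw [hXYw]
    exact add_mem (aY_mul_mem_monomialSpan ih) (Submodule.smul_mem _ _ (sub_mem
      (zpow_unitK_mul_mem_monomialSpan 2 hw_mem) (zpow_unitK_mul_mem_monomialSpan (-2) hw_mem)))

theorem monomialSpan_eq_top : monomialSpan (t : ℂ) = ⊤ := by
  refine submodule_eq_top_of_adjoin_eq_top_of_mul_mem (adjoin_generators_eq_top t) ?_ ?_
  · simpa using monomial_mem_monomialSpan (t := t) 0 0 0
  · rintro _ (rfl | rfl | rfl | rfl) z hz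
    · exact aX_mul_mem_monomialSpan hz
    · exact aY_mul_mem_monomialSpan hz
    · simpa [val_unitK] using zpow_unitK_mul_mem_monomialSpan 1 hz
    · simpa [val_inv_unitK] using zpow_unitK_mul_mem_monomialSpan (-1) hz

/-- The linear map `(p_{ab}) ↦ ∑ Yᵃ p_{ab}(K) Xᵇ`, which puts elements of `Aₜ` in
Poincaré–Birkhoff–Witt form. Grouping the powers of `K` into one Laurent polynomial for each
`(a, b)` turns linear independence of the monomials into a count of the roots of `p_{ab}`. -/
def pbw (t : ℂ) : (ℕ × ℕ →₀ ℂ[T;T⁻¹]) →ₗ[ℂ] At t :=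
  Finsupp.lsum ℂ fun x ↦
    LinearMap.mulLeftRight ℂ (aY t ^ x.1, aX t ^ x.2) ∘ₗ (laurentAeval (unitK t)).toLinearMap

lemma pbw_apply (t : ℂ) (f : ℕ × ℕ →₀ ℂ[T;T⁻¹]) :
    pbw t f = ∑ x ∈ f.support, aY t ^ x.1 * laurentAeval (unitK t) (f x) * aX t ^ x.2 := by
  simp [pbw, Finsupp.sum]

theorem pbw_surjective : Function.Surjective (pbw (t : ℂ)) := by
  rw [← LinearMap.range_eq_top, eq_top_iff, ← monomialSpan_eq_top]
  refine Submodule.span_le.2 ?_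
  rintro _ ⟨⟨a, n, b⟩, rfl⟩
  exact ⟨.single (a, b) (T n), by simp [pbw, laurentAeval_T]⟩

end Spanning

section QuantumIntegers

lemma qint_ne_zero {t : ℂˣ} (ht : ¬IsOfFinOrder t) {n : ℤ} (hn : n ≠ 0) : qint t n ≠ 0 := by
  have zpow_ne {k : ℤ} (hk : k ≠ 0) : (t : ℂ) ^ (2 * k) ≠ (t : ℂ) ^ (-(2 * k)) := fun h ↦ by
    have := injective_zpow_iff_not_isOfFinOrder.2 ht (Units.ext (by exact_mod_cast h))
    lia
  refine div_ne_zero (sub_ne_zero.2 (zpow_ne hn)) (sub_ne_zero.2 ?_)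
  simpa [zpow_neg, zpow_ofNat] using zpow_ne one_ne_zero

/-- The falling quantum factorial `[n][n-1]⋯[n-k+1]`, the scalar by which `X ^ k` carries `e_n` to
`e_{n-k}` and `Y ^ k` carries `e_{m-n}` to `e_{m-n+k}`. -/
def qintDescFactorial (t : ℂ) (n : ℤ) (k : ℕ) : ℂ := ∏ i ∈ Finset.range k, qint t (n - i)

lemma qintDescFactorial_succ (t : ℂ) (n : ℤ) (k : ℕ) :
    qintDescFactorial t n (k + 1) = qintDescFactorial t n k * qint t (n - k) :=
  Finset.prod_range_succ _ _

lemma qintDescFactorial_eq_zero_of_lt (t : ℂ) {n k : ℕ} (h : n < k) :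
    qintDescFactorial t n k = 0 :=
  Finset.prod_eq_zero (Finset.mem_range.2 h) (by simp [qint])

lemma qintDescFactorial_ne_zero {t : ℂˣ} (ht : ¬IsOfFinOrder t) {n k : ℕ} (h : k ≤ n) :
    qintDescFactorial t n k ≠ 0 :=
  Finset.prod_ne_zero_iff.2 fun i hi ↦ qint_ne_zero ht (by have := Finset.mem_range.1 hi; lia)

end QuantumIntegers

section Representation

/-- The basis vector `e_j` of the module `m̲`, equal to `0` for `j > m`. Indexing by `ℕ` rather
than `Fin (m + 1)` makes `e_{m+1} = 0` hold by convention. -/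
def basisVec (m j : ℕ) : Fin (m + 1) → ℂ := fun i ↦ if (i : ℕ) = j then 1 else 0

lemma basisVec_eq_single {m j : ℕ} (hj : j < m + 1) : basisVec m j = Pi.single ⟨j, hj⟩ 1 := by
  ext i
  simp [basisVec, Pi.single_apply, Fin.ext_iff]

lemma basisVec_eq_zero {m j : ℕ} (hj : m < j) : basisVec m j = 0 := by
  ext i
  simp [basisVec, (i.is_le.trans_lt hj).ne]

-- For `j = 0` the truncated `j - 1` is harmless, because `[0] = 0`.
lemma Xmat_mulVec_basisVec (t : ℂ) {m j : ℕ} (hj : j ≤ m) :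
    Xmat t m *ᵥ basisVec m j = qint t j • basisVec m (j - 1) := by
  ext i
  rw [basisVec_eq_single (Nat.lt_succ_of_le hj), Matrix.mulVec_single_one]
  cases j <;> simp [Xmat, basisVec, qint, eq_comm]

lemma Ymat_mulVec_basisVec (t : ℂ) (m j : ℕ) :
    Ymat t m *ᵥ basisVec m j = qint t (m - j) • basisVec m (j + 1) := by
  rcases le_or_gt j m with hj | hj
  · ext i
    rw [basisVec_eq_single (Nat.lt_succ_of_le hj), Matrix.mulVec_single_one]
    simp [Ymat, basisVec]
  · simp [basisVec_eq_zero hj, basisVec_eq_zero (hj.trans j.lt_succ_self)]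

lemma diagonal_mulVec_basisVec {m j : ℕ} (d : ℕ → ℂ) :
    Matrix.diagonal (fun i : Fin (m + 1) ↦ d i) *ᵥ basisVec m j = d j • basisVec m j := by
  ext i
  by_cases hij : (i : ℕ) = j <;> simp [Matrix.mulVec_diagonal, basisVec, hij]

lemma Xmat_pow_mulVec_basisVec (t : ℂ) {m j : ℕ} (hj : j ≤ m) (b : ℕ) :
    (Xmat t m ^ b) *ᵥ basisVec m j = qintDescFactorial t j b • basisVec m (j - b) := by
  induction b with
  | zero => simp [qintDescFactorial]
  | succ b ih =>
    rw [pow_succ', ← Matrix.mulVec_mulVec, ih, Matrix.mulVec_smul,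
      Xmat_mulVec_basisVec t (by lia), smul_smul, qintDescFactorial_succ, Nat.sub_sub]
    rcases le_or_gt b j with hbj | hbj
    · rw [Nat.cast_sub hbj]
    · simp [qintDescFactorial_eq_zero_of_lt t hbj]

lemma Ymat_pow_mulVec_basisVec (t : ℂ) (m j a : ℕ) :
    (Ymat t m ^ a) *ᵥ basisVec m j = qintDescFactorial t (m - j) a • basisVec m (j + a) := by
  induction a with
  | zero => simp [qintDescFactorial]
  | succ a ih =>
    rw [pow_succ', ← Matrix.mulVec_mulVec, ih, Matrix.mulVec_smul, Ymat_mulVec_basisVec,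
      smul_smul, qintDescFactorial_succ, Nat.cast_add, sub_sub, add_assoc]

variable {t : ℂˣ} {m : ℕ} {ρ : At (t : ℂ) →ₐ[ℂ] Matrix (Fin (m + 1)) (Fin (m + 1)) ℂ}

lemma IsRho.map_laurentAeval_unitK (hρ : IsRho t m ρ) (p : ℂ[T;T⁻¹]) :
    ρ (laurentAeval (unitK t) p) =
      Matrix.diagonal fun j : Fin (m + 1) ↦ laurentAeval (t ^ (m - 2 * j : ℤ)) p := by
  have : ρ.comp (laurentAeval (unitK t)) = (Matrix.diagonalAlgHom ℂ).comp
      (AlgHom.pi fun j : Fin (m + 1) ↦ laurentAeval (t ^ (m - 2 * j : ℤ))) :=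
    laurentPolynomial_algHom_ext <| by
      simp [laurentAeval_T, val_unitK, hρ.2.2.1, Kmat]
  exact DFunLike.congr_fun this p

lemma IsRho.map_pbwTerm_mulVec_basisVec (hρ : IsRho t m ρ) {j : ℕ} (hj : j ≤ m)
    (a b : ℕ) (p : ℂ[T;T⁻¹]) :
    ρ (aY t ^ a * laurentAeval (unitK t) p * aX t ^ b) *ᵥ basisVec m j =
      (qintDescFactorial t j b * laurentAeval (t ^ (m - 2 * (j - b : ℕ) : ℤ)) p *
        qintDescFactorial t (m - (j - b : ℕ)) a) • basisVec m (j - b + a) := by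
  rw [map_mul, map_mul, map_pow, map_pow, hρ.1, hρ.2.1, hρ.map_laurentAeval_unitK,
    ← Matrix.mulVec_mulVec, ← Matrix.mulVec_mulVec, Xmat_pow_mulVec_basisVec _ hj,
    Matrix.mulVec_smul, Matrix.mulVec_smul,
    diagonal_mulVec_basisVec fun j ↦ laurentAeval (t ^ (m - 2 * j : ℤ)) p,
    Matrix.mulVec_smul, Ymat_pow_mulVec_basisVec, smul_smul, smul_smul]

lemma IsRho.map_pbw_mulVec_basisVec_apply (hρ : IsRho t m ρ) {f : ℕ × ℕ →₀ ℂ[T;T⁻¹]} {a b : ℕ}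
    (ha : a ≤ m) (hb : b ≤ m) (hmin : ∀ x ∈ f.support, b ≤ x.2) :
    (ρ (pbw t f) *ᵥ basisVec m b) ⟨a, Nat.lt_succ_of_le ha⟩ =
      qintDescFactorial t b b * laurentAeval (t ^ m) (f (a, b)) * qintDescFactorial t m a := by
  rw [pbw_apply, map_sum, Matrix.sum_mulVec, Finset.sum_apply, Finset.sum_eq_single (a, b)]
  · rw [hρ.map_pbwTerm_mulVec_basisVec hb]
    simp [basisVec]
  · rintro ⟨a', b'⟩ hx hne
    rw [hρ.map_pbwTerm_mulVec_basisVec hb]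
    rcases (hmin _ hx).lt_or_eq with hlt | rfl
    · simp [qintDescFactorial_eq_zero_of_lt t hlt]
    · have : a ≠ a' := by rintro rfl; exact hne rfl
      simp [basisVec, this]
  · intro hx
    simp [Finsupp.notMem_support_iff.1 hx]

end Representation

theorem eq_zero_of_map_pbw_eq_zero {t : ℂˣ} (ht : ¬IsOfFinOrder t) {S : Set ℕ} (hS : S.Infinite)
    {ρ : ∀ m : S, At (t : ℂ) →ₐ[ℂ] Matrix (Fin (m + 1)) (Fin (m + 1)) ℂ}
    (hρ : ∀ m : S, IsRho t m (ρ m)) {f : ℕ × ℕ →₀ ℂ[T;T⁻¹]} (hf : ∀ m : S, ρ m (pbw t f) = 0) :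
    f = 0 := by
  by_contra hne
  obtain ⟨⟨a, b⟩, hab, hmin⟩ :=
    f.support.exists_min_image Prod.snd (Finsupp.support_nonempty_iff.2 hne)
  refine Finsupp.mem_support_iff.1 hab ?_
  have hroots : ((t ^ ·) '' (S \ Set.Iio (max a b))).Infinite :=
    (hS.sdiff (Set.finite_Iio _)).image (injective_pow_iff_not_isOfFinOrder.2 ht).injOn
  refine laurentPolynomial_eq_zero_of_infinite_root hroots ?_
  rintro _ ⟨m, ⟨hmS, hm⟩, rfl⟩
  obtain ⟨ham, hbm⟩ := max_le_iff.1 (Set.notMem_Iio.1 hm)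
  have hentry := (hρ ⟨m, hmS⟩).map_pbw_mulVec_basisVec_apply ham hbm hmin
  rw [hf, Matrix.zero_mulVec, Pi.zero_apply, eq_comm, mul_eq_zero, mul_eq_zero] at hentry
  simpa [qintDescFactorial_ne_zero ht ham, qintDescFactorial_ne_zero ht le_rfl] using hentry

theorem stmt3_general (t : ℂ) (ht : t ≠ 0) (hroot : ∀ k : ℕ, 0 < k → t ^ k ≠ 1)
    {S : Set ℕ} (hS : S.Infinite)
    (ρ : ∀ m : S, At t →ₐ[ℂ] Matrix (Fin (m + 1)) (Fin (m + 1)) ℂ)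
    (hρ : ∀ m : S, IsRho t m (ρ m)) :
    Function.Injective fun (Z : At t) (m : S) ↦ ρ m Z := by
  lift t to ℂˣ using ht.isUnit
  have ht' : ¬IsOfFinOrder t := fun h ↦ by
    obtain ⟨k, hk, htk⟩ := isOfFinOrder_iff_pow_eq_one.1 h
    exact hroot k hk (by rw [← Units.val_pow_eq_pow_val, htk, Units.val_one])
  intro Z W hZW
  obtain ⟨f, hf⟩ := pbw_surjective (Z - W)
  have hf0 : f = 0 := eq_zero_of_map_pbw_eq_zero ht' hS hρ fun m ↦ by
    rw [hf, map_sub, sub_eq_zero]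
    exact congrFun hZW m
  rw [← sub_eq_zero, ← hf, hf0, map_zero]

/-- The homomorphism `Θ : Aₜ → ∏_{m≥0} M_{m+1}(ℂ)`,
`Θ(Z) = (ρ_0(Z), ρ_1(Z), …)`, is injective. -/
theorem stmt3 (t : ℂ) (ht : t ≠ 0) (hroot : ∀ k : ℕ, 0 < k → t ^ k ≠ 1)
    (ρ : ∀ m : ℕ, At t →ₐ[ℂ] Matrix (Fin (m + 1)) (Fin (m + 1)) ℂ)
    (hρ : ∀ m, IsRho t m (ρ m)) :
    Function.Injective (fun Z : At t => (fun m : ℕ => ρ m Z :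
      ∀ m : ℕ, Matrix (Fin (m + 1)) (Fin (m + 1)) ℂ)) := by
  exact fun Z W hZW ↦ stmt3_general t ht hroot Set.infinite_univ (fun m ↦ ρ m) (fun m ↦ hρ m)
    (funext fun m ↦ congrFun hZW m)

end
end
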